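/- For any θ > 0 and positive integers K' < K, let G be N×K and G' be N×K' with i.i.d. standard complex Gaussian entries. Then E[log det(I_N + (θ/K) G G†)] ≥ E[log det(I_N + (θ/K') G' G'†)]. -/

import Mathlib

open MeasureTheory ProbabilityTheory Matrix

/-- Matrices over a measurable space are measurable via the (defeq) pi structure. -/
instance matrixMeasurableSpace {m n α : Type*} [MeasurableSpace α] :
    MeasurableSpace (Matrix m n α) :=
  inferInstanceAs (MeasurableSpace (m → n → α))

/-- The law of an `N × K` random complex matrix with i.i.d. `CN(0, v)` entries. -/
noncomputable def complexGaussianMatrix (N K : ℕ) (v : NNReal) :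
    Measure (Matrix (Fin N) (Fin K) ℂ) :=
  (Measure.pi fun _ : Fin N × Fin K × Bool => gaussianReal 0 (v / 2)).map
    (fun f => Matrix.of fun i j =>
      (f (i, j, false) : ℂ) + (f (i, j, true) : ℂ) * Complex.I)

section helpers

open scoped ComplexOrder

/-- `log det C ≤ tr C - N` for positive definite `C`. -/
lemma log_det_le_trace_sub {N : ℕ} {C : Matrix (Fin N) (Fin N) ℂ} (hC : C.PosDef) :
    Real.log C.det.re ≤ C.trace.re - N := by
  have h1 := hC.1.det_eq_prod_eigenvalues
  have h2 := hC.1.trace_eq_sum_eigenvalues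
  have h1' : C.det.re = ∏ i, hC.1.eigenvalues i := by
    rw [h1]
    have : (∏ i, ((hC.1.eigenvalues i : ℝ) : ℂ)) = ((∏ i, hC.1.eigenvalues i : ℝ) : ℂ) := by
      push_cast; rfl
    exact (congrArg Complex.re this).trans (Complex.ofReal_re _)
  have h2' : C.trace.re = ∑ i, hC.1.eigenvalues i := by
    rw [h2]
    have : (∑ i, ((hC.1.eigenvalues i : ℝ) : ℂ)) = ((∑ i, hC.1.eigenvalues i : ℝ) : ℂ) := by
      push_cast; rfl
    exact (congrArg Complex.re this).trans (Complex.ofReal_re _)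
  rw [h1', h2', Real.log_prod (fun i _ => (hC.eigenvalues_pos i).ne')]
  calc ∑ i, Real.log (hC.1.eigenvalues i) ≤ ∑ i, (hC.1.eigenvalues i - 1) :=
        Finset.sum_le_sum fun i _ => Real.log_le_sub_one_of_pos (hC.eigenvalues_pos i)
    _ = _ := by simp [Finset.sum_sub_distrib]

lemma det_re_pos {N : ℕ} {C : Matrix (Fin N) (Fin N) ℂ} (hC : C.PosDef) :
    0 < C.det.re ∧ C.det = (C.det.re : ℂ) := by
  have h := hC.det_pos
  rw [Complex.lt_def] at h
  refine ⟨h.1, ?_⟩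
  apply Complex.ext <;> simp [← h.2]

open scoped MatrixOrder in
/-- Supporting hyperplane inequality for `log det`. -/
lemma log_det_le_tangent {N : ℕ} {A B : Matrix (Fin N) (Fin N) ℂ} (hA : A.PosDef)
    (hB : B.PosDef) :
    Real.log B.det.re ≤ Real.log A.det.re + ((A⁻¹ * B).trace.re - N) := by
  obtain ⟨Q, hQ⟩ := CStarAlgebra.nonneg_iff_eq_star_mul_self.mp
    (Matrix.nonneg_iff_posSemidef.mpr hA.inv.posSemidef)
  have hQ' : A⁻¹ = Qᴴ * Q := hQ
  obtain ⟨a1, a2⟩ := det_re_pos hA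
  obtain ⟨b1, b2⟩ := det_re_pos hB
  have hdet : (Q * B * Qᴴ).det = ((B.det.re / A.det.re : ℝ) : ℂ) := by
    have : (Q * B * Qᴴ).det = A⁻¹.det * B.det := by
      rw [hQ']; simp only [Matrix.det_mul]; ring
    rw [this, Matrix.det_nonsing_inv, Ring.inverse_eq_inv', a2, b2]
    push_cast
    simp only [Complex.ofReal_re]
    ring
  have htr : (Q * B * Qᴴ).trace = (A⁻¹ * B).trace := by
    rw [hQ', Matrix.trace_mul_comm, ← Matrix.mul_assoc]
  have hps : (Q * B * Qᴴ).PosSemidef := hB.posSemidef.mul_mul_conjTranspose_same Q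
  have hpd : (Q * B * Qᴴ).PosDef := by
    rw [hps.posDef_iff_det_ne_zero, hdet]
    exact_mod_cast (div_pos b1 a1).ne'
  have := log_det_le_trace_sub hpd
  rw [hdet, htr, Complex.ofReal_re, Real.log_div b1.ne' a1.ne'] at this
  linarith

lemma posDef_one_add {N K : ℕ} {c : ℝ} (hc : 0 ≤ c) (G : Matrix (Fin N) (Fin K) ℂ) :
    (1 + (c : ℂ) • (G * Gᴴ)).PosDef :=
  Matrix.PosDef.one.add_posSemidef
    ((Matrix.posSemidef_self_mul_conjTranspose G).smul (by exact_mod_cast hc))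

/-- Averaging inequality for `log det`. -/
lemma average_log_det {N M : ℕ} {A : Matrix (Fin N) (Fin N) ℂ} (hA : A.PosDef)
    (B : Fin M → Matrix (Fin N) (Fin N) ℂ) (hB : ∀ t, (B t).PosDef)
    (hsum : ∑ t, B t = (M : ℂ) • A) :
    ∑ t, Real.log (B t).det.re ≤ M * Real.log A.det.re := by
  have hdet : IsUnit A.det := hA.det_pos.ne'.isUnit
  have htr : ∑ t, (A⁻¹ * B t).trace.re = M * N := by
    rw [← Complex.re_sum, ← Matrix.trace_sum, ← Matrix.mul_sum, hsum, Matrix.mul_smul,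
      Matrix.nonsing_inv_mul _ hdet]
    simp
  calc ∑ t, Real.log (B t).det.re
      ≤ ∑ t, (Real.log A.det.re + ((A⁻¹ * B t).trace.re - N)) :=
        Finset.sum_le_sum fun t _ => log_det_le_tangent hA (hB t)
    _ = _ := by
        rw [Finset.sum_add_distrib, Finset.sum_sub_distrib, htr]; simp

/-- The realisation of the Gaussian matrix from its coordinates. -/
noncomputable def gmat (N K : ℕ) (f : Fin N × Fin K × Bool → ℝ) : Matrix (Fin N) (Fin K) ℂ :=
  Matrix.of fun i j => (f (i, j, false) : ℂ) + (f (i, j, true) : ℂ) * Complex.I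

noncomputable def gpi (N K : ℕ) : Measure (Fin N × Fin K × Bool → ℝ) :=
  Measure.pi fun _ => gaussianReal 0 (1 / 2)

instance (N K : ℕ) : IsProbabilityMeasure (gpi N K) := by unfold gpi; infer_instance

noncomputable def ld {N K : ℕ} (c : ℝ) (G : Matrix (Fin N) (Fin K) ℂ) : ℝ :=
  Real.log (Matrix.det (1 + (c : ℂ) • (G * Gᴴ))).re

lemma measurable_entry {N K : ℕ} (i : Fin N) (j : Fin K) :
    Measurable (fun G : Matrix (Fin N) (Fin K) ℂ => G i j) :=
  (measurable_pi_apply j).comp (measurable_pi_apply (X := fun _ : Fin N => Fin K → ℂ) i)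

lemma measurable_gmat (N K : ℕ) : Measurable (gmat N K) := by
  refine measurable_pi_iff.mpr fun i => measurable_pi_iff.mpr fun j => ?_
  have : Measurable fun f : Fin N × Fin K × Bool → ℝ =>
    (f (i, j, false) : ℂ) + (f (i, j, true) : ℂ) * Complex.I := by fun_prop
  exact this

lemma measurable_ld {N K : ℕ} (c : ℝ) :
    Measurable (ld c : Matrix (Fin N) (Fin K) ℂ → ℝ) := by
  have hentry := @measurable_entry N K
  have : Measurable fun G : Matrix (Fin N) (Fin K) ℂ =>
      (Matrix.det (1 + (c : ℂ) • (G * Gᴴ))) := by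
    simp only [Matrix.det_apply', Matrix.add_apply, Matrix.smul_apply, Matrix.mul_apply,
      Matrix.conjTranspose_apply]
    refine Finset.measurable_sum _ fun σ _ => ?_
    have : Measurable fun G : Matrix (Fin N) (Fin K) ℂ =>
        ∏ i, ((1 : Matrix (Fin N) (Fin N) ℂ) (σ i) i + (c : ℂ) • ∑ j, G (σ i) j * star (G i j)) := by
      refine Finset.measurable_prod _ fun i _ => ?_
      refine measurable_const.add ?_
      have : Measurable fun G : Matrix (Fin N) (Fin K) ℂ => ∑ j, G (σ i) j * star (G i j) := by
        refine Finset.measurable_sum _ fun j _ => ?_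
        exact (hentry _ _).mul (continuous_star.measurable.comp (hentry _ _))
      exact this.const_smul (c : ℂ)
    exact this.const_mul _
  exact Real.measurable_log.comp (Complex.measurable_re.comp this)

lemma integral_eq (N K : ℕ) (c : ℝ) :
    ∫ G, Real.log (Matrix.det (1 + (c : ℂ) • (G * Gᴴ))).re ∂(complexGaussianMatrix N K 1)
      = ∫ f, ld c (gmat N K f) ∂(gpi N K) := by
  have h : complexGaussianMatrix N K 1 = (gpi N K).map (gmat N K) := rfl
  rw [h]
  exact integral_map (measurable_gmat N K).aemeasurable (measurable_ld c).aestronglyMeasurable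

lemma ld_nonneg_le {N K : ℕ} {c : ℝ} (hc : 0 ≤ c) (G : Matrix (Fin N) (Fin K) ℂ) :
    0 ≤ ld c G ∧ ld c G ≤ c * ∑ i, ∑ j, Complex.normSq (G i j) := by
  have hpd := posDef_one_add hc G
  have htr : (G * Gᴴ).trace = ((∑ i, ∑ j, Complex.normSq (G i j) : ℝ) : ℂ) := by
    simp [Matrix.trace, Matrix.mul_apply, Complex.mul_conj]
  constructor
  · have h := log_det_le_tangent hpd (Matrix.PosDef.one (n := Fin N) (R := ℂ))
    have hinv : ((1 + (c : ℂ) • (G * Gᴴ))⁻¹ * 1).trace.re ≤ (N : ℝ) := by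
      set A := 1 + (c : ℂ) • (G * Gᴴ) with hAdef
      have hdet : IsUnit A.det := hpd.det_pos.ne'.isUnit
      have h1 : A⁻¹ = 1 - (c : ℂ) • (A⁻¹ * (G * Gᴴ)) := by
        have h2 : A⁻¹ * A = 1 := Matrix.nonsing_inv_mul _ hdet
        have h3 : A⁻¹ * A = A⁻¹ + (c : ℂ) • (A⁻¹ * (G * Gᴴ)) := by
          conv_lhs => rw [hAdef, Matrix.mul_add, Matrix.mul_one, Matrix.mul_smul]
        rw [eq_sub_iff_add_eq, ← h3, h2]
      have h4 : (A⁻¹ * (G * Gᴴ)).trace = (Gᴴ * A⁻¹ * G).trace := by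
        rw [← Matrix.mul_assoc, Matrix.trace_mul_comm, Matrix.mul_assoc]
      have h5 : 0 ≤ (Gᴴ * A⁻¹ * G).trace :=
        (hpd.inv.posSemidef.conjTranspose_mul_mul_same G).trace_nonneg
      have h6 : 0 ≤ (Gᴴ * A⁻¹ * G).trace.re := (Complex.le_def.mp h5).1
      rw [Matrix.mul_one, h1, Matrix.trace_sub, Matrix.trace_smul, h4]
      simp only [Matrix.trace_one, Fintype.card_fin, smul_eq_mul, Complex.sub_re,
        Complex.natCast_re, Complex.re_ofReal_mul]
      have := mul_nonneg hc h6
      linarith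
    simp only [Matrix.det_one, Complex.one_re, Real.log_one] at h
    unfold ld
    linarith
  · have h := log_det_le_trace_sub hpd
    rw [Matrix.trace_add, Matrix.trace_smul, htr] at h
    simp only [Matrix.trace_one, Fintype.card_fin, smul_eq_mul, Complex.add_re, Complex.natCast_re,
      Complex.re_ofReal_mul, Complex.ofReal_re] at h
    unfold ld
    linarith

lemma integrable_ld {N K : ℕ} {c : ℝ} (hc : 0 ≤ c) :
    Integrable (fun f => ld c (gmat N K f)) (gpi N K) := by
  have hsq : ∀ p, Integrable (fun f : Fin N × Fin K × Bool → ℝ => f p ^ 2) (gpi N K) := by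
    intro p
    have h : Integrable (fun x : ℝ => x ^ 2) (gaussianReal 0 (1 / 2)) :=
      (memLp_id_gaussianReal (μ := 0) (v := 1 / 2) 2).integrable_sq
    exact (measurePreserving_eval (fun _ : Fin N × Fin K × Bool =>
      gaussianReal 0 (1 / 2)) p).integrable_comp_of_integrable h
  have hb : Integrable (fun f => c * ∑ i, ∑ j, Complex.normSq (gmat N K f i j)) (gpi N K) := by
    refine Integrable.const_mul (integrable_finsetSum _ fun i _ =>
      integrable_finsetSum _ fun j _ => ?_) c
    have := (hsq (i, j, false)).add (hsq (i, j, true))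
    refine this.congr (Filter.Eventually.of_forall fun f => ?_)
    simp [gmat, Complex.normSq_apply, sq]
  refine hb.mono' ((measurable_ld c).comp (measurable_gmat N K)).aestronglyMeasurable
    (Filter.Eventually.of_forall fun f => ?_)
  obtain ⟨h1, h2⟩ := ld_nonneg_le hc (gmat N K f)
  rw [Real.norm_of_nonneg h1]
  exact h2

lemma measurePreserving_sub {N K K' : ℕ} (e : Fin K' → Fin K) (he : Function.Injective e) :
    MeasurePreserving (fun (f : Fin N × Fin K × Bool → ℝ) (p : Fin N × Fin K' × Bool) =>
      f (p.1, e p.2.1, p.2.2)) (gpi N K) (gpi N K') := by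
  refine ⟨by fun_prop, ?_⟩
  have hind : iIndepFun (fun (i : Fin N × Fin K × Bool) (ω : Fin N × Fin K × Bool → ℝ) => ω i)
      (gpi N K) := iIndepFun_pi (X := fun _ => id) (fun _ => aemeasurable_id)
  have hinj : Function.Injective
      (fun p : Fin N × Fin K' × Bool => ((p.1, e p.2.1, p.2.2) : Fin N × Fin K × Bool)) := by
    rintro ⟨a, b, c⟩ ⟨a', b', c'⟩ h
    simp only [Prod.mk.injEq] at h ⊢
    exact ⟨h.1, he h.2.1, h.2.2⟩
  have h2 := hind.precomp hinj
  rw [iIndepFun_iff_map_fun_eq_pi_map (fun i => (measurable_pi_apply _).aemeasurable)] at h2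
  rw [h2]
  unfold gpi
  congr 1
  funext p
  exact (measurePreserving_eval (fun _ : Fin N × Fin K × Bool => gaussianReal 0 (1 / 2)) _).map_eq

end helpers

/-- For `θ > 0` and `K' < K`, spreading the power `θ` over `K` i.i.d. Gaussian columns
yields at least the expected log-determinant obtained with `K'` columns:
`E[log det(I_N + (θ/K) G G†)] ≥ E[log det(I_N + (θ/K') G' G'†)]`. -/
theorem expected_logdet_monotone_in_users (N K K' : ℕ) (hK' : 1 ≤ K') (hKK : K' < K)
    (θ : ℝ) (hθ : 0 < θ) :
    (∫ G, Real.log (Matrix.det (1 + ((θ / K : ℝ) : ℂ) • (G * Gᴴ))).re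
        ∂(complexGaussianMatrix N K 1)) ≥
    ∫ G', Real.log (Matrix.det (1 + ((θ / K' : ℝ) : ℂ) • (G' * G'ᴴ))).re
        ∂(complexGaussianMatrix N K' 1) := by
  have hK0 : 0 < K := by omega
  have : NeZero K := ⟨hK0.ne'⟩
  have hKr : (0 : ℝ) < K := by exact_mod_cast hK0
  have hKr' : (0 : ℝ) < K' := by exact_mod_cast hK'
  have hc : 0 ≤ θ / K := by positivity
  have hc' : 0 ≤ θ / K' := by positivity
  rw [ge_iff_le, integral_eq, integral_eq]
  let e : Fin K → Fin K' → Fin K := fun t j => t + Fin.castLE hKK.le j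
  have he : ∀ t, Function.Injective (e t) := fun t =>
    (add_right_injective t).comp (Fin.castLE_injective hKK.le)
  let r : Fin K → (Fin N × Fin K × Bool → ℝ) → (Fin N × Fin K' × Bool → ℝ) :=
    fun t f p => f (p.1, e t p.2.1, p.2.2)
  have hr : ∀ t, MeasurePreserving (r t) (gpi N K) (gpi N K') := fun t =>
    measurePreserving_sub (e t) (he t)
  have hI : ∀ t, Integrable (fun f => ld (θ / K') (gmat N K' (r t f))) (gpi N K) := fun t =>
    (hr t).integrable_comp_of_integrable (integrable_ld hc')
  have hE : ∀ t, ∫ f, ld (θ / K') (gmat N K' (r t f)) ∂(gpi N K)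
      = ∫ f, ld (θ / K') (gmat N K' f) ∂(gpi N K') := by
    intro t
    rw [← (hr t).map_eq]
    exact (integral_map (hr t).measurable.aemeasurable
      ((measurable_ld _).comp (measurable_gmat N K')).aestronglyMeasurable).symm
  have hpt : ∀ f, ∑ t, ld (θ / K') (gmat N K' (r t f)) ≤ K * ld (θ / K) (gmat N K f) := by
    intro f
    refine average_log_det (posDef_one_add hc _) _ (fun t => posDef_one_add hc' _) ?_
    have hs : ∑ t, (gmat N K' (r t f) * (gmat N K' (r t f))ᴴ)
        = (K' : ℂ) • (gmat N K f * (gmat N K f)ᴴ) := by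
      ext a b
      simp only [Matrix.sum_apply, Matrix.mul_apply, Matrix.smul_apply,
        Matrix.conjTranspose_apply]
      rw [Finset.sum_comm]
      have : ∀ j : Fin K', ∑ t, gmat N K' (r t f) a j * star (gmat N K' (r t f) b j)
          = ∑ k, gmat N K f a k * star (gmat N K f b k) := fun j =>
        Equiv.sum_comp (Equiv.addRight (Fin.castLE hKK.le j))
          (fun k => gmat N K f a k * star (gmat N K f b k))
      simp only [this]
      simp
    rw [Finset.sum_add_distrib, ← Finset.smul_sum, hs, smul_smul, smul_add, smul_smul]
    have hKc : (K : ℂ) ≠ 0 := by exact_mod_cast hKr.ne'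
    have hKc' : (K' : ℂ) ≠ 0 := by exact_mod_cast hKr'.ne'
    congr 1
    · ext i j; simp [Matrix.smul_apply]
    · congr 1; push_cast; field_simp
  have hInt := integral_mono (integrable_finsetSum Finset.univ fun t _ => hI t)
    ((integrable_ld (N := N) (K := K) hc).const_mul (K : ℝ)) hpt
  rw [integral_finsetSum _ (fun t _ => hI t), integral_const_mul] at hInt
  simp only [hE, Finset.sum_const, Finset.card_univ, Fintype.card_fin, nsmul_eq_mul] at hInt
  exact le_of_mul_le_mul_left hInt hKr
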